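/- Let L > 0 and let f : ℝ^d → ℝ be convex and differentiable with L-Lipschitz gradient, with a minimizer x_⋆. Let x_{t+1} = x_t − (1/L)∇f(x_t). Then the sequence V_t = t(f(x_t) − f(x_⋆)) + (L/2)‖x_t − x_⋆‖² is non-increasing in t; consequently, for every T ≥ 1, f(x_T) − f(x_⋆) ≤ L‖x_0 − x_⋆‖²/(2T). -/

import Mathlib

open RealInnerProductSpace

/-!
Write `x⁺ = x - (1/L) ∇f(x)`. Smoothness gives `f(x⁺) ≤ f(x) - ‖∇f(x)‖² / (2L)`, while expanding the
square gives `(L/2)‖x⁺ - z‖² = (L/2)‖x - z‖² - ⟪∇f(x), x - z⟫ + ‖∇f(x)‖² / (2L)`. On adding the two,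
the terms `‖∇f(x)‖² / (2L)` cancel and convexity absorbs the inner product, so that
`f(x⁺) - f(z) + (L/2)‖x⁺ - z‖² ≤ (L/2)‖x - z‖²` for every point `z`. Together with `t` times the
descent `f(x⁺) ≤ f(x)`, this is the decrease of the Lyapunov function.
-/

lemma le_add_mul_add_sq_of_deriv_le {φ φ' : ℝ → ℝ} {a b c M : ℝ} (hab : a ≤ b)
    (hφ : ∀ s ∈ Set.Icc a b, HasDerivAt φ (φ' s) s)
    (hbound : ∀ s ∈ Set.Ico a b, φ' s ≤ c + M * (s - a)) :
    φ b ≤ φ a + c * (b - a) + M / 2 * (b - a) ^ 2 := by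
  let B : ℝ → ℝ := fun s => φ a + c * (s - a) + M / 2 * (s - a) ^ 2
  have hB : ∀ s, HasDerivAt B (c + M * (s - a)) s := fun s => by
    have hlin : HasDerivAt (fun s => s - a) 1 s := (hasDerivAt_id s).sub_const a
    convert! ((hlin.const_mul c).const_add (φ a)).add ((hlin.pow 2).const_mul (M / 2)) using 1
    simp only [Nat.cast_ofNat]
    ring
  exact image_le_of_deriv_right_le_deriv_boundary (B := B)
    (fun s hs => (hφ s hs).continuousAt.continuousWithinAt)
    (fun s hs => (hφ s (Set.Ico_subset_Icc_self hs)).hasDerivWithinAt)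
    (by simp [B]) (fun s _ => (hB s).continuousAt.continuousWithinAt)
    (fun s _ => (hB s).hasDerivWithinAt) hbound (Set.right_mem_Icc.2 hab)

section NormedSpace

variable {E : Type*} [NormedAddCommGroup E] [NormedSpace ℝ E] {f : E → ℝ} {x y : E}

lemma add_fderivWithin_le_of_convexOn {s : Set E} {f' : E →L[ℝ] ℝ} (hconv : ConvexOn ℝ s f)
    (hx : x ∈ s) (hy : y ∈ s) (hf : HasFDerivWithinAt f f' s x) :
    f x + f' (y - x) ≤ f y := by
  let γ : ℝ →ᵃ[ℝ] E := AffineMap.lineMap x y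
  have hγ₀ : γ 0 = x := AffineMap.lineMap_apply_zero x y
  have hγ₁ : γ 1 = y := AffineMap.lineMap_apply_one x y
  have hderiv : HasDerivWithinAt (f ∘ γ) (f' (y - x)) (γ ⁻¹' s) 0 :=
    HasFDerivWithinAt.comp_hasDerivWithinAt 0 (by rwa [hγ₀]) AffineMap.hasDerivWithinAt_lineMap
      (Set.mapsTo_preimage γ s)
  have hslope : f' (y - x) ≤ slope (f ∘ γ) 0 1 :=
    (hconv.comp_affineMap γ).le_slope_of_hasDerivWithinAt
      (by rwa [Set.mem_preimage, hγ₀]) (by rwa [Set.mem_preimage, hγ₁]) one_pos hderiv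
  simp only [slope_def_field, Function.comp_apply, hγ₀, hγ₁, sub_zero, div_one] at hslope
  linarith

lemma le_add_fderiv_add_sq_of_lipschitz {L : ℝ} {f' : E → E →L[ℝ] ℝ}
    (hf : ∀ w ∈ segment ℝ x y, HasFDerivAt f (f' w) w)
    (hlip : ∀ w ∈ segment ℝ x y, ‖f' w - f' x‖ ≤ L * ‖w - x‖) :
    f y ≤ f x + f' x (y - x) + L / 2 * ‖y - x‖ ^ 2 := by
  let γ : ℝ →ᵃ[ℝ] E := AffineMap.lineMap x y
  have hγ : ∀ s ∈ Set.Icc (0 : ℝ) 1, γ s ∈ segment ℝ x y := fun s hs =>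
    segment_eq_image_lineMap ℝ x y ▸ Set.mem_image_of_mem γ hs
  have hderiv : ∀ s ∈ Set.Icc (0 : ℝ) 1, HasDerivAt (f ∘ γ) (f' (γ s) (y - x)) s := fun s hs =>
    (hf _ (hγ s hs)).comp_hasDerivAt s AffineMap.hasDerivAt_lineMap
  have hbound : ∀ s ∈ Set.Ico (0 : ℝ) 1,
      f' (γ s) (y - x) ≤ f' x (y - x) + L * ‖y - x‖ ^ 2 * (s - 0) := fun s hs => by
    have hdist : ‖γ s - x‖ = s * ‖y - x‖ := by
      rw [AffineMap.lineMap_apply, vsub_eq_sub, vadd_eq_add, add_sub_cancel_right, norm_smul,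
        Real.norm_of_nonneg hs.1]
    rw [← sub_le_iff_le_add']
    calc f' (γ s) (y - x) - f' x (y - x)
      _ ≤ ‖f' (γ s) - f' x‖ * ‖y - x‖ :=
        (le_abs_self _).trans ((f' (γ s) - f' x).le_opNorm (y - x))
      _ ≤ L * ‖γ s - x‖ * ‖y - x‖ := by
        gcongr
        exact hlip _ (hγ s (Set.Ico_subset_Icc_self hs))
      _ = L * ‖y - x‖ ^ 2 * (s - 0) := by rw [hdist]; ring
  have hle := le_add_mul_add_sq_of_deriv_le zero_le_one hderiv hbound
  simp only [Function.comp_apply, γ, AffineMap.lineMap_apply_zero, AffineMap.lineMap_apply_one]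
    at hle
  linarith

end NormedSpace

lemma half_mul_norm_sub_smul_sub_sq {E : Type*} [SeminormedAddCommGroup E] [InnerProductSpace ℝ E]
    {L : ℝ} (hL : L ≠ 0) (x g z : E) :
    L / 2 * ‖x - (1 / L) • g - z‖ ^ 2
      = L / 2 * ‖x - z‖ ^ 2 - ⟪g, x - z⟫ + ‖g‖ ^ 2 / (2 * L) := by
  rw [sub_right_comm, norm_sub_sq_real, inner_smul_right, real_inner_comm, norm_smul, mul_pow,
    Real.norm_eq_abs, sq_abs]
  field_simp

section GradientStep

variable {E : Type*} [NormedAddCommGroup E] [InnerProductSpace ℝ E] [CompleteSpace E]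
  {f : E → ℝ} {L : ℝ} {x : E}

lemma norm_fderiv_sub_fderiv_eq_norm_gradient_sub (f : E → ℝ) (a b : E) :
    ‖fderiv ℝ f a - fderiv ℝ f b‖ = ‖gradient f a - gradient f b‖ := by
  rw [← toDual_gradient, ← toDual_gradient, ← map_sub, LinearIsometryEquiv.norm_map]

lemma apply_gradient_step_le (hL : 0 < L) (hdiff : Differentiable ℝ f)
    (hlip : ∀ y, ‖gradient f y - gradient f x‖ ≤ L * ‖y - x‖) :
    f (x - (1 / L) • gradient f x) ≤ f x - ‖gradient f x‖ ^ 2 / (2 * L) := by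
  have hquad := le_add_fderiv_add_sq_of_lipschitz (y := x - (1 / L) • gradient f x)
    (fun w _ => (hdiff w).hasFDerivAt)
    (fun w _ => (norm_fderiv_sub_fderiv_eq_norm_gradient_sub f w x).trans_le (hlip w))
  rw [← inner_gradient_left, sub_sub_cancel_left, inner_neg_right, inner_smul_right,
    real_inner_self_eq_norm_sq, norm_neg, norm_smul, mul_pow, Real.norm_eq_abs, sq_abs] at hquad
  refine hquad.trans_eq ?_
  field_simp
  ring

lemma apply_gradient_step_sub_add_le (hL : 0 < L) (hconv : ConvexOn ℝ Set.univ f)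
    (hdiff : Differentiable ℝ f) (hlip : ∀ y, ‖gradient f y - gradient f x‖ ≤ L * ‖y - x‖)
    (z : E) :
    f (x - (1 / L) • gradient f x) - f z + L / 2 * ‖x - (1 / L) • gradient f x - z‖ ^ 2
      ≤ L / 2 * ‖x - z‖ ^ 2 := by
  have hdescent := apply_gradient_step_le hL hdiff hlip
  have htangent : f x + ⟪gradient f x, z - x⟫ ≤ f z := by
    rw [inner_gradient_left]
    exact add_fderivWithin_le_of_convexOn hconv (Set.mem_univ x) (Set.mem_univ z)
      (hdiff x).hasFDerivAt.hasFDerivWithinAt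
  rw [← neg_sub, inner_neg_right] at htangent
  rw [half_mul_norm_sub_smul_sub_sq hL.ne']
  linarith

end GradientStep

/-- The Lyapunov function `V` of a sequence `x`, whose decrease along gradient descent yields the
`O(1/t)` rate. It is taken relative to a reference point `z`, which the paper chooses to be a
minimizer `x⋆` of `f`. -/
noncomputable def gdLyapunov {E : Type*} [SeminormedAddCommGroup E] (f : E → ℝ) (L : ℝ) (z : E)
    (x : ℕ → E) (t : ℕ) : ℝ :=
  t * (f (x t) - f z) + L / 2 * ‖x t - z‖ ^ 2

lemma antitone_gdLyapunov {E : Type*} [NormedAddCommGroup E] [InnerProductSpace ℝ E]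
    [CompleteSpace E] {f : E → ℝ} {L : ℝ} (hL : 0 < L) (hconv : ConvexOn ℝ Set.univ f)
    (hdiff : Differentiable ℝ f) (hlip : ∀ a b, ‖gradient f a - gradient f b‖ ≤ L * ‖a - b‖)
    (z : E) {x : ℕ → E} (hrec : ∀ t, x (t + 1) = x t - (1 / L) • gradient f (x t)) :
    Antitone (gdLyapunov f L z x) := by
  refine antitone_nat_of_succ_le fun t => ?_
  have hstep : f (x (t + 1)) - f z + L / 2 * ‖x (t + 1) - z‖ ^ 2 ≤ L / 2 * ‖x t - z‖ ^ 2 := by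
    rw [hrec]
    exact apply_gradient_step_sub_add_le hL hconv hdiff (fun y => hlip y _) z
  have hdescent : f (x (t + 1)) ≤ f (x t) := by
    rw [hrec]
    exact (apply_gradient_step_le hL hdiff fun y => hlip y _).trans
      (sub_le_self _ (by positivity))
  have hscaled : t * (f (x (t + 1)) - f z) ≤ t * (f (x t) - f z) := by gcongr
  simp only [gdLyapunov, Nat.cast_add_one]
  linarith

lemma sub_le_of_antitone_gdLyapunov {E : Type*} [SeminormedAddCommGroup E] {f : E → ℝ} {L : ℝ}
    (hL : 0 ≤ L) {z : E} {x : ℕ → E} (hV : Antitone (gdLyapunov f L z x)) {T : ℕ} (hT : 1 ≤ T) :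
    f (x T) - f z ≤ L * ‖x 0 - z‖ ^ 2 / (2 * T) := by
  have hle : T * (f (x T) - f z) + L / 2 * ‖x T - z‖ ^ 2 ≤ L / 2 * ‖x 0 - z‖ ^ 2 := by
    simpa [gdLyapunov] using hV (Nat.zero_le T)
  have hnonneg : 0 ≤ L / 2 * ‖x T - z‖ ^ 2 := by positivity
  rw [le_div_iff₀ (by positivity)]
  linarith

theorem gd_lyapunov_decrease_general {E : Type*} [NormedAddCommGroup E] [InnerProductSpace ℝ E]
    [CompleteSpace E] {f : E → ℝ} {L : ℝ} (hL : 0 < L) (hconv : ConvexOn ℝ Set.univ f)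
    (hdiff : Differentiable ℝ f) (hlip : ∀ a b, ‖gradient f a - gradient f b‖ ≤ L * ‖a - b‖)
    (z : E) {x : ℕ → E} (hrec : ∀ t, x (t + 1) = x t - (1 / L) • gradient f (x t)) :
    Antitone (gdLyapunov f L z x) ∧
      ∀ T : ℕ, 1 ≤ T → f (x T) - f z ≤ L * ‖x 0 - z‖ ^ 2 / (2 * (T : ℝ)) :=
  have hV := antitone_gdLyapunov hL hconv hdiff hlip z hrec
  ⟨hV, fun _ hT => sub_le_of_antitone_gdLyapunov hL.le hV hT⟩

/-- For gradient descent with step-size `1/L` on a convex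
`L`-smooth function `f` with minimizer `x⋆`, the Lyapunov sequence
`V t = t (f (x t) - f x⋆) + (L/2) ‖x t - x⋆‖²` is non-increasing; consequently
`f (x T) - f x⋆ ≤ L ‖x 0 - x⋆‖² / (2T)` for all `T ≥ 1`. -/
theorem gd_lyapunov_decrease {d : ℕ} (L : ℝ) (hL : 0 < L)
    (f : EuclideanSpace ℝ (Fin d) → ℝ)
    (hconv : ConvexOn ℝ Set.univ f) (hdiff : Differentiable ℝ f)
    (hlip : ∀ a b, ‖gradient f a - gradient f b‖ ≤ L * ‖a - b‖)
    (xstar : EuclideanSpace ℝ (Fin d)) (hstar : ∀ z, f xstar ≤ f z)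
    (x : ℕ → EuclideanSpace ℝ (Fin d))
    (hrec : ∀ t, x (t + 1) = x t - (1 / L) • gradient f (x t)) :
    (∀ t : ℕ,
      ((t : ℝ) + 1) * (f (x (t + 1)) - f xstar) + L / 2 * ‖x (t + 1) - xstar‖ ^ 2 ≤
        (t : ℝ) * (f (x t) - f xstar) + L / 2 * ‖x t - xstar‖ ^ 2) ∧
      ∀ T : ℕ, 1 ≤ T →
        f (x T) - f xstar ≤ L * ‖x 0 - xstar‖ ^ 2 / (2 * (T : ℝ)) := by
  have h := gd_lyapunov_decrease_general hL hconv hdiff hlip xstar hrec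
  exact ⟨fun t => by simpa [gdLyapunov] using h.1 t.le_succ, h.2⟩
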